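/- For every interval [α,β] ⊆ (0,1] with α < β, λ(F^{-(n-1)}([α,β])) = (log(β/α)/log n)·(1 + O_{α,β}(1/log n)) as n → ∞, where F is the Farey map and λ is Lebesgue measure. In particular, λ(F^{-(n-1)}([α,β]))·log n → log(β/α). -/

import Mathlib

open Real MeasureTheory Filter

noncomputable def farey (x : ℝ) : ℝ := if x ≤ 1/2 then x / (1 - x) else (1 - x) / x

noncomputable def preimageMeasure (α β : ℝ) (n : ℕ) : ℝ :=
  (volume (farey^[n - 1] ⁻¹' (Set.Icc α β) ∩ Set.Icc (0:ℝ) 1)).toReal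


/-- Density of the push-forward of Lebesgue measure under the iterates of the Farey map,
multiplied by `x` (density relative to the invariant measure `dx / x`). -/
noncomputable def fareyG : ℕ → ℝ → ℝ
  | 0, x => x
  | n + 1, x => 1 / (1 + x) * fareyG n (x / (1 + x)) + x / (1 + x) * fareyG n (1 / (1 + x))

lemma fareyG_measurable (n : ℕ) : Measurable (fareyG n) := by
  induction n with
  | zero => exact measurable_id
  | succ n ih =>
    have h1 : Measurable (fun x : ℝ => fareyG n (x / (1 + x))) := ih.comp (by fun_prop)
    have h2 : Measurable (fun x : ℝ => fareyG n (1 / (1 + x))) := ih.comp (by fun_prop)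
    have : fareyG (n+1) = fun x => 1 / (1 + x) * fareyG n (x / (1 + x)) +
        x / (1 + x) * fareyG n (1 / (1 + x)) := by
      funext x; rfl
    rw [this]
    fun_prop

/-- The symmetrised function. -/
noncomputable def fareyH (g : ℝ → ℝ) (p : ℝ) : ℝ := p * g (1 - p) + (1 - p) * g p

lemma fareyH_concave (g : ℝ → ℝ) (hc : ConcaveOn ℝ (Set.Icc 0 1) g)
    (hm : MonotoneOn g (Set.Icc 0 1)) (h0 : ∀ x ∈ Set.Icc (0:ℝ) 1, 0 ≤ g x) :
    ConcaveOn ℝ (Set.Icc 0 1) (fareyH g) := by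
  have hconv : Convex ℝ (Set.Icc (0:ℝ) 1) := convex_Icc 0 1
  have hid : ConcaveOn ℝ (Set.Icc (0:ℝ) 1) (fun p : ℝ => p) := concaveOn_id hconv
  have hid' : ConcaveOn ℝ (Set.Icc (0:ℝ) 1) (fun p : ℝ => 1 - p) := by
    refine ⟨hconv, ?_⟩
    intro x _ y _ a b _ _ hab
    simp only [smul_eq_mul]
    have : b = 1 - a := by linarith
    subst this
    apply le_of_eq; ring
  have hmem : ∀ x ∈ Set.Icc (0:ℝ) 1, 1 - x ∈ Set.Icc (0:ℝ) 1 := by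
    intro x hx; constructor <;> linarith [hx.1, hx.2]
  have hg' : ConcaveOn ℝ (Set.Icc (0:ℝ) 1) (fun p : ℝ => g (1 - p)) := by
    refine ⟨hconv, ?_⟩
    intro x hx y hy a b ha hb hab
    have := hc.2 (hmem x hx) (hmem y hy) ha hb hab
    simp only [smul_eq_mul] at this ⊢
    have hb' : b = 1 - a := by linarith
    subst hb'
    convert this using 2
    ring
  have h1 : ConcaveOn ℝ (Set.Icc (0:ℝ) 1) ((fun p : ℝ => p) * (fun p : ℝ => g (1 - p))) := by
    refine hid.mul hg' (fun x hx => hx.1) (fun x hx => h0 _ (hmem x hx)) ?_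
    intro x hx y hy hxy
    by_contra hlt
    push Not at hlt
    have := hm (hmem y hy) (hmem x hx) (by linarith)
    simp only at hxy
    linarith
  have h2 : ConcaveOn ℝ (Set.Icc (0:ℝ) 1) ((fun p : ℝ => 1 - p) * (fun p : ℝ => g p)) := by
    refine hid'.mul hc (fun x hx => (hmem x hx).1) (fun x hx => h0 _ hx) ?_
    intro x hx y hy hxy
    by_contra hlt
    push Not at hlt
    have := hm hy hx (by linarith)
    simp only at hxy
    linarith
  exact h1.add h2

lemma fareyH_symm (g : ℝ → ℝ) (p : ℝ) : fareyH g (1 - p) = fareyH g p := by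
  unfold fareyH
  rw [sub_sub_cancel]; ring

lemma fareyH_anti (g : ℝ → ℝ) (hH : ConcaveOn ℝ (Set.Icc 0 1) (fareyH g)) :
    AntitoneOn (fareyH g) (Set.Icc (1/2) 1) := by
  intro p hp q hq hpq
  rcases eq_or_lt_of_le hpq with h | h
  · rw [h]
  have hq2 : 0 < 2 * q - 1 := by linarith [hp.1]
  have hq3 : 2 * q - 1 ≠ 0 := hq2.ne'
  have hqm : q ∈ Set.Icc (0:ℝ) 1 := ⟨by linarith [hq.1], hq.2⟩
  have hqm' : 1 - q ∈ Set.Icc (0:ℝ) 1 := ⟨by linarith [hq.2], by linarith [hq.1]⟩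
  have ha : 0 ≤ (p + q - 1) / (2 * q - 1) := div_nonneg (by linarith [hp.1, hq.1]) hq2.le
  have hb : 0 ≤ (q - p) / (2 * q - 1) := div_nonneg (by linarith) hq2.le
  have hab : (p + q - 1) / (2 * q - 1) + (q - p) / (2 * q - 1) = 1 := by
    rw [← add_div, div_eq_one_iff_eq hq3]; ring
  have key := hH.2 hqm hqm' ha hb hab
  have e : (p + q - 1) / (2 * q - 1) * q + (q - p) / (2 * q - 1) * (1 - q) = p := by
    rw [div_mul_eq_mul_div, div_mul_eq_mul_div, ← add_div, div_eq_iff hq3]; ring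
  simp only [smul_eq_mul] at key
  rw [e, fareyH_symm, ← add_mul] at key
  rwa [hab, one_mul] at key

lemma fareyG_succ_eq (n : ℕ) {x : ℝ} (hx : 0 ≤ x) :
    fareyG (n+1) x = fareyH (fareyG n) (1 / (1 + x)) := by
  have h : 1 - 1 / (1 + x) = x / (1 + x) := by
    have : (1 + x) ≠ 0 := by positivity
    field_simp; ring
  simp only [fareyG, fareyH, h]

lemma fareyG_class (n : ℕ) : ConcaveOn ℝ (Set.Icc 0 1) (fareyG n) ∧
    MonotoneOn (fareyG n) (Set.Icc 0 1) ∧ ∀ x ∈ Set.Icc (0:ℝ) 1, 0 ≤ fareyG n x := by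
  induction n with
  | zero =>
    exact ⟨concaveOn_id (convex_Icc 0 1), fun x _ y _ h => h, fun x hx => hx.1⟩
  | succ n ih =>
    obtain ⟨hc, hm, h0⟩ := ih
    have hH := fareyH_concave _ hc hm h0
    have hA := fareyH_anti _ hH
    have hpm : ∀ x ∈ Set.Icc (0:ℝ) 1, 1 / (1 + x) ∈ Set.Icc (1/2 : ℝ) 1 := by
      intro x hx
      have : 0 < 1 + x := by linarith [hx.1]
      constructor
      · rw [div_le_div_iff₀ (by norm_num) this]; linarith [hx.2]
      · rw [div_le_one this]; linarith [hx.1]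
    have hsub : Set.Icc (1/2 : ℝ) 1 ⊆ Set.Icc 0 1 := Set.Icc_subset_Icc_left (by norm_num)
    refine ⟨⟨convex_Icc 0 1, ?_⟩, ?_, ?_⟩
    · intro x hx y hy a b ha hb hab
      have hz : a • x + b • y ∈ Set.Icc (0:ℝ) 1 := convex_Icc (0:ℝ) 1 hx hy ha hb hab
      rw [fareyG_succ_eq n hx.1, fareyG_succ_eq n hy.1, fareyG_succ_eq n hz.1]
      have k1 := hH.2 (hsub (hpm x hx)) (hsub (hpm y hy)) ha hb hab
      refine k1.trans ?_
      have hmem : a • (1 / (1 + x)) + b • (1 / (1 + y)) ∈ Set.Icc (1/2 : ℝ) 1 :=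
        convex_Icc (1/2:ℝ) 1 (hpm x hx) (hpm y hy) ha hb hab
      refine hA (hpm _ hz) hmem ?_
      have hx1 : 0 < 1 + x := by linarith [hx.1]
      have hy1 : 0 < 1 + y := by linarith [hy.1]
      have hb' : b = 1 - a := by linarith
      have hz1 : 0 < 1 + (a * x + b * y) := by
        have := hz.1; simp only [smul_eq_mul] at this; linarith
      simp only [smul_eq_mul]
      have e : a * (1 / (1 + x)) + b * (1 / (1 + y)) - 1 / (1 + (a * x + b * y)) =
          a * b * (x - y)^2 / ((1 + x) * (1 + y) * (1 + (a * x + b * y))) := by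
        subst hb'
        field_simp
        ring
      have : 0 ≤ a * b * (x - y)^2 / ((1 + x) * (1 + y) * (1 + (a * x + b * y))) := by
        positivity
      linarith
    · intro x hx y hy hxy
      rw [fareyG_succ_eq n hx.1, fareyG_succ_eq n hy.1]
      refine hA (hpm y hy) (hpm x hx) ?_
      have hx1 : 0 < 1 + x := by linarith [hx.1]
      exact one_div_le_one_div_of_le hx1 (by linarith)
    · intro x hx
      have h1 := hsub (hpm x hx)
      rw [fareyG_succ_eq n hx.1, fareyH]
      have h2 : 1 - 1 / (1 + x) ∈ Set.Icc (0:ℝ) 1 := ⟨by linarith [h1.2], by linarith [h1.1]⟩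
      exact add_nonneg (mul_nonneg h1.1 (h0 _ h2)) (mul_nonneg h2.1 (h0 _ h1))

lemma fareyG_half (n : ℕ) : fareyG n (1/2) = fareyG (n+1) 1 := by
  simp only [fareyG]
  norm_num
  ring

lemma fareyG_inv (n j : ℕ) (hj : 1 ≤ j) :
    fareyG (n+1) (1 / (j:ℝ)) = (j:ℝ) / (j+1) * fareyG n (1 / ((j+1 : ℕ) : ℝ)) +
      1 / ((j:ℝ)+1) * fareyG n ((j:ℝ) / (j+1)) := by
  have hj0 : (0:ℝ) < j := by exact_mod_cast hj
  have e1 : 1 / (1 + 1 / (j:ℝ)) = (j:ℝ) / (j+1) := by field_simp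
  have e2 : 1 / (j:ℝ) / (1 + 1 / (j:ℝ)) = 1 / ((j:ℝ)+1) := by field_simp
  simp only [fareyG]
  rw [e1, e2]
  push_cast
  ring

lemma farey_measurable : Measurable farey := by
  unfold farey
  exact Measurable.ite measurableSet_Iic (by fun_prop) (by fun_prop)

lemma farey_left {y : ℝ} (h0 : 0 ≤ y) (h1 : y ≤ 1) : farey (y / (1 + y)) = y := by
  have hy : 0 < 1 + y := by linarith
  unfold farey
  rw [if_pos (by rw [div_le_div_iff₀ hy (by norm_num)]; linarith)]
  field_simp
  ring

lemma farey_right {y : ℝ} (h0 : 0 ≤ y) (h1 : y < 1) : farey (1 / (1 + y)) = y := by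
  have hy : 0 < 1 + y := by linarith
  unfold farey
  rw [if_neg (by rw [not_le, div_lt_div_iff₀ (by norm_num) hy]; linarith)]
  field_simp
  ring

lemma image_left : (fun y : ℝ => y / (1 + y)) '' Set.Ioc 0 1 = Set.Ioc 0 (1/2) := by
  ext x
  constructor
  · rintro ⟨y, ⟨h0, h1⟩, rfl⟩
    have hy : 0 < 1 + y := by linarith
    refine ⟨by positivity, ?_⟩
    simp only
    rw [div_le_div_iff₀ hy (by norm_num)]; linarith
  · rintro ⟨h0, h1⟩
    have hx : 0 < 1 - x := by linarith
    refine ⟨x / (1 - x), ⟨by positivity, ?_⟩, ?_⟩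
    · rw [div_le_one hx]; linarith
    · simp only
      have : 1 + x / (1 - x) = 1 / (1 - x) := by field_simp; ring
      rw [this]; field_simp

lemma image_right : (fun y : ℝ => 1 / (1 + y)) '' Set.Ico 0 1 = Set.Ioc (1/2) 1 := by
  ext x
  constructor
  · rintro ⟨y, ⟨h0, h1⟩, rfl⟩
    have hy : 0 < 1 + y := by linarith
    refine ⟨?_, ?_⟩
    · simp only
      rw [div_lt_div_iff₀ (by norm_num) hy]; linarith
    · simp only
      rw [div_le_one hy]; linarith
  · rintro ⟨h0, h1⟩
    have hx : 0 < x := by linarith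
    refine ⟨(1 - x) / x, ⟨div_nonneg (by linarith) hx.le, ?_⟩, ?_⟩
    · rw [div_lt_one hx]; linarith
    · simp only
      have : 1 + (1 - x) / x = 1 / x := by field_simp; ring
      rw [this]; field_simp

lemma transfer_step (φ : ℝ → ENNReal) (hφ : Measurable φ) (n : ℕ) :
    ∫⁻ x in Set.Ioc (0:ℝ) 1, φ (farey x) * ENNReal.ofReal (fareyG n x / x) =
    ∫⁻ x in Set.Ioc (0:ℝ) 1, φ x * ENNReal.ofReal (fareyG (n+1) x / x) := by
  obtain ⟨-, -, hpos⟩ := fareyG_class n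
  have hsplit : Set.Ioc (0:ℝ) 1 = Set.Ioc 0 (1/2) ∪ Set.Ioc (1/2) 1 :=
    (Set.Ioc_union_Ioc_eq_Ioc (by norm_num) (by norm_num)).symm
  have hdisj : Disjoint (Set.Ioc (0:ℝ) (1/2)) (Set.Ioc (1/2) 1) :=
    Set.Ioc_disjoint_Ioc_of_le le_rfl
  have hL : ∫⁻ x in Set.Ioc (0:ℝ) (1/2), φ (farey x) * ENNReal.ofReal (fareyG n x / x) =
      ∫⁻ y in Set.Ioc (0:ℝ) 1, φ y *
        ENNReal.ofReal (1 / (1 + y) * fareyG n (y / (1 + y)) / y) := by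
    rw [← image_left, lintegral_image_eq_lintegral_abs_deriv_mul (f' := fun y => 1 / (1 + y)^2)
      measurableSet_Ioc]
    · refine setLIntegral_congr_fun measurableSet_Ioc ?_
      intro y hy
      have hy1 : 0 < 1 + y := by linarith [hy.1]
      have hy0 := hy.1
      simp only
      rw [farey_left hy.1.le hy.2, mul_left_comm, ← ENNReal.ofReal_mul (abs_nonneg _),
        abs_of_nonneg (by positivity)]
      congr 2
      field_simp
    · intro y hy
      have hy1 : 1 + y ≠ 0 := by linarith [hy.1]
      have := (hasDerivAt_id y).div ((hasDerivAt_id y).const_add 1) hy1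
      refine (this.congr_deriv ?_).hasDerivWithinAt
      simp
    · intro x hx y hy hxy
      simp only at hxy
      have := congrArg farey hxy
      rwa [farey_left hx.1.le hx.2, farey_left hy.1.le hy.2] at this
  have hR : ∫⁻ x in Set.Ioc (1/2:ℝ) 1, φ (farey x) * ENNReal.ofReal (fareyG n x / x) =
      ∫⁻ y in Set.Ioc (0:ℝ) 1, φ y *
        ENNReal.ofReal (y / (1 + y) * fareyG n (1 / (1 + y)) / y) := by
    rw [← image_right, lintegral_image_eq_lintegral_abs_deriv_mul (f' := fun y => - 1 / (1 + y)^2)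
      measurableSet_Ico]
    · rw [← setLIntegral_congr (Ioo_ae_eq_Ioc (a := (0:ℝ)) (b := 1)),
        ← setLIntegral_congr (Ioo_ae_eq_Ico (a := (0:ℝ)) (b := 1))]
      refine setLIntegral_congr_fun measurableSet_Ioo ?_
      intro y hy
      have hy1 : 0 < 1 + y := by linarith [hy.1]
      have hy0 := hy.1
      simp only
      rw [farey_right hy.1.le hy.2, mul_left_comm, ← ENNReal.ofReal_mul (abs_nonneg _),
        neg_div, abs_neg, abs_of_nonneg (by positivity)]
      congr 2
      field_simp
    · intro y hy
      have hy1 : 1 + y ≠ 0 := by linarith [hy.1]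
      have := ((hasDerivAt_id y).const_add 1).inv hy1
      simp only [one_div]
      exact (this.congr_deriv (by simp)).hasDerivWithinAt
    · intro x hx y hy hxy
      simp only at hxy
      have := congrArg farey hxy
      rwa [farey_right hx.1 hx.2, farey_right hy.1 hy.2] at this
  have hm := fareyG_measurable n
  have hm1 : Measurable (fun y : ℝ => fareyG n (y / (1 + y))) := hm.comp (by fun_prop)
  rw [hsplit, lintegral_union measurableSet_Ioc hdisj, hL, hR, ← hsplit,
    ← lintegral_add_left (by fun_prop)]
  refine setLIntegral_congr_fun measurableSet_Ioc ?_
  intro y hy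
  have hy1 : 0 < 1 + y := by linarith [hy.1]
  have hy0 := hy.1
  have m1 : y / (1 + y) ∈ Set.Icc (0:ℝ) 1 :=
    ⟨by positivity, by rw [div_le_one hy1]; linarith⟩
  have m2 : 1 / (1 + y) ∈ Set.Icc (0:ℝ) 1 :=
    ⟨by positivity, by rw [div_le_one hy1]; linarith⟩
  have p1 := hpos _ m1
  have p2 := hpos _ m2
  simp only
  rw [← mul_add, ← ENNReal.ofReal_add (by positivity) (by positivity), ← add_div]
  rfl

lemma transfer_iterate (n : ℕ) : ∀ (φ : ℝ → ENNReal), Measurable φ →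
    ∫⁻ x in Set.Ioc (0:ℝ) 1, φ (farey^[n] x) =
    ∫⁻ x in Set.Ioc (0:ℝ) 1, φ x * ENNReal.ofReal (fareyG n x / x) := by
  induction n with
  | zero =>
    intro φ _
    refine setLIntegral_congr_fun measurableSet_Ioc ?_
    intro x hx
    have : x ≠ 0 := hx.1.ne'
    simp [fareyG, this]
  | succ n ih =>
    intro φ hφ
    rw [← transfer_step φ hφ n, ← ih (fun x => φ (farey x)) (hφ.comp farey_measurable)]
    simp only [Function.iterate_succ_apply']

lemma measure_eq (n : ℕ) (E : Set ℝ) (hE : MeasurableSet E) (hE' : E ⊆ Set.Ioc 0 1) :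
    volume (farey^[n] ⁻¹' E ∩ Set.Icc (0:ℝ) 1) =
      ∫⁻ x in E, ENNReal.ofReal (fareyG n x / x) := by
  have hmeas : MeasurableSet (farey^[n] ⁻¹' E) := farey_measurable.iterate n hE
  have h := transfer_iterate n (E.indicator 1) (measurable_one.indicator hE)
  have e1 : ∀ x, E.indicator (1 : ℝ → ENNReal) (farey^[n] x) =
      (farey^[n] ⁻¹' E).indicator 1 x := fun x => rfl
  have e2 : ∀ x, E.indicator (1 : ℝ → ENNReal) x * ENNReal.ofReal (fareyG n x / x) =
      E.indicator (fun x => ENNReal.ofReal (fareyG n x / x)) x := by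
    intro x
    by_cases hx : x ∈ E <;> simp [hx]
  simp only [e1, e2] at h
  rw [lintegral_indicator_one hmeas, lintegral_indicator hE, Measure.restrict_restrict hE,
    Set.inter_eq_left.mpr hE', restrict_Ioc_eq_restrict_Icc, Measure.restrict_apply hmeas] at h
  exact h

lemma total_mass (n : ℕ) : ∫⁻ x in Set.Ioo (0:ℝ) 1, ENNReal.ofReal (fareyG n x / x) = 1 := by
  have h := transfer_iterate n 1 measurable_one
  simp only [Pi.one_apply, one_mul, lintegral_one] at h
  rw [setLIntegral_congr (Ioo_ae_eq_Ioc (a := (0:ℝ)) (b := 1)), ← h]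
  simp

/-- One step of the renewal decomposition. -/
lemma renewal_step (n m : ℕ) :
    ∫⁻ x in Set.Ioo (0:ℝ) (1 / (m + 1)), ENNReal.ofReal (fareyG (n+1) x / x) =
    (∫⁻ x in Set.Ioo (0:ℝ) (1 / ((m + 1 : ℕ) + 1)), ENNReal.ofReal (fareyG n x / x)) +
    ∫⁻ x in Set.Ioo (((m:ℝ) + 1) / (m + 2)) 1, ENNReal.ofReal (fareyG n x / x) := by
  have hm0 : (0:ℝ) ≤ m := Nat.cast_nonneg m
  have hE : MeasurableSet (Set.Ioo (0:ℝ) (1 / (m + 1))) := measurableSet_Ioo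
  have h := transfer_step ((Set.Ioo (0:ℝ) (1 / (m + 1))).indicator 1)
    (measurable_one.indicator hE) n
  have ind : ∀ (E : Set ℝ) (k : ℕ), ∀ x, E.indicator (1 : ℝ → ENNReal) x *
      ENNReal.ofReal (fareyG k x / x) =
      E.indicator (fun x => ENNReal.ofReal (fareyG k x / x)) x := by
    intro E k x
    by_cases hx : x ∈ E <;> simp [hx]
  have hs1 : Set.Ioo (0:ℝ) (1 / (m + 1)) ⊆ Set.Ioc 0 1 := by
    intro x hx
    refine ⟨hx.1, hx.2.le.trans ?_⟩
    rw [div_le_one (by positivity)]; linarith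
  have hs2 : Set.Ioo (0:ℝ) (1 / ((m + 1 : ℕ) + 1)) ∪ Set.Ioo (((m:ℝ) + 1) / (m + 2)) 1 ⊆
      Set.Ioc 0 1 := by
    rintro x (hx | hx)
    · refine ⟨hx.1, hx.2.le.trans ?_⟩
      rw [div_le_one (by positivity)]; push_cast; linarith
    · exact ⟨lt_trans (by positivity) hx.1, hx.2.le⟩
  have hd : Disjoint (Set.Ioo (0:ℝ) (1 / ((m + 1 : ℕ) + 1)))
      (Set.Ioo (((m:ℝ) + 1) / (m + 2)) 1) := by
    rw [Set.disjoint_left]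
    intro x hx hx'
    have h1 := hx.2
    have h2 := hx'.1
    push_cast at h1
    rw [lt_div_iff₀ (by positivity)] at h1
    rw [div_lt_iff₀ (by positivity)] at h2
    linarith
  have hU : MeasurableSet (Set.Ioo (0:ℝ) (1 / ((m + 1 : ℕ) + 1)) ∪
    Set.Ioo (((m:ℝ) + 1) / (m + 2)) 1) := measurableSet_Ioo.union measurableSet_Ioo
  have hpre : ∀ x ∈ Set.Ioo (0:ℝ) 1, (Set.Ioo (0:ℝ) (1 / (m + 1))).indicator
      (1 : ℝ → ENNReal) (farey x) =
      (Set.Ioo (0:ℝ) (1 / ((m + 1 : ℕ) + 1)) ∪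
        Set.Ioo (((m:ℝ) + 1) / (m + 2)) 1).indicator 1 x := by
    intro x hx
    have hiff : farey x ∈ Set.Ioo (0:ℝ) (1 / (m + 1)) ↔
        x ∈ (Set.Ioo (0:ℝ) (1 / ((m + 1 : ℕ) + 1)) ∪ Set.Ioo (((m:ℝ) + 1) / (m + 2)) 1) := by
      have hx0 := hx.1
      have hx1 := hx.2
      have h1x : 0 < 1 - x := by linarith
      simp only [Set.mem_union, Set.mem_Ioo, farey]
      push_cast
      have a1 : x < 1 / ((m:ℝ) + 1 + 1) ↔ x * (m + 1 + 1) < 1 := lt_div_iff₀ (by positivity)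
      have a2 : ((m:ℝ) + 1) / (m + 2) < x ↔ (m:ℝ) + 1 < x * (m + 2) :=
        div_lt_iff₀ (by positivity)
      rw [a1, a2]
      split_ifs with hh
      · have a3 : x / (1 - x) < 1 / ((m:ℝ) + 1) ↔ x * (m + 1) < 1 * (1 - x) :=
          div_lt_div_iff₀ h1x (by positivity)
        rw [a3]
        have a4 : 0 < x / (1 - x) := by positivity
        constructor
        · rintro ⟨_, h2⟩
          left; exact ⟨hx0, by linarith⟩
        · rintro (⟨_, h2⟩ | ⟨h2, _⟩)
          · exact ⟨a4, by linarith⟩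
          · exfalso; nlinarith
      · push Not at hh
        have a3 : (1 - x) / x < 1 / ((m:ℝ) + 1) ↔ (1 - x) * (m + 1) < 1 * x :=
          div_lt_div_iff₀ hx0 (by positivity)
        rw [a3]
        have a4 : 0 < (1 - x) / x := by positivity
        constructor
        · rintro ⟨_, h2⟩
          right; exact ⟨by linarith, hx1⟩
        · rintro (⟨_, h2⟩ | ⟨h2, _⟩)
          · exfalso; nlinarith
          · exact ⟨a4, by linarith⟩
    by_cases hf : farey x ∈ Set.Ioo (0:ℝ) (1 / (m + 1))
    · rw [Set.indicator_of_mem hf, Set.indicator_of_mem (hiff.mp hf)]; rfl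
    · rw [Set.indicator_of_notMem hf, Set.indicator_of_notMem (fun h => hf (hiff.mpr h))]
  have hl : ∫⁻ x in Set.Ioc (0:ℝ) 1, (Set.Ioo (0:ℝ) (1 / (m + 1))).indicator 1 (farey x) *
      ENNReal.ofReal (fareyG n x / x) = ∫⁻ x in Set.Ioc (0:ℝ) 1,
      (Set.Ioo (0:ℝ) (1 / ((m + 1 : ℕ) + 1)) ∪
        Set.Ioo (((m:ℝ) + 1) / (m + 2)) 1).indicator 1 x * ENNReal.ofReal (fareyG n x / x) := by
    rw [← setLIntegral_congr (Ioo_ae_eq_Ioc (a := (0:ℝ)) (b := 1)),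
      ← setLIntegral_congr (Ioo_ae_eq_Ioc (a := (0:ℝ)) (b := 1))]
    refine setLIntegral_congr_fun measurableSet_Ioo ?_
    intro x hx
    simp only
    rw [hpre x hx]
  rw [hl] at h
  simp only [ind] at h
  rw [lintegral_indicator hE, lintegral_indicator hU, Measure.restrict_restrict hE,
    Measure.restrict_restrict hU, Set.inter_eq_left.mpr hs1, Set.inter_eq_left.mpr hs2,
    lintegral_union measurableSet_Ioo hd] at h
  exact h.symm

lemma renewal_sum (m k : ℕ) :
    ∫⁻ x in Set.Ioo (0:ℝ) (1 / (m + 1)), ENNReal.ofReal (fareyG k x / x) =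
    ENNReal.ofReal (1 / ((m + k : ℕ) + 1)) +
    ∑ j ∈ Finset.range k, ∫⁻ x in Set.Ioo ((((m + (k - 1 - j) : ℕ):ℝ) + 1) /
      ((m + (k - 1 - j) : ℕ) + 2)) 1, ENNReal.ofReal (fareyG j x / x) := by
  induction k generalizing m with
  | zero =>
    have : ∫⁻ x in Set.Ioo (0:ℝ) (1 / (m + 1)), ENNReal.ofReal (fareyG 0 x / x) =
        ∫⁻ x in Set.Ioo (0:ℝ) (1 / (m + 1)), 1 := by
      refine setLIntegral_congr_fun measurableSet_Ioo ?_
      intro x hx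
      have : x ≠ 0 := hx.1.ne'
      simp [fareyG, this]
    rw [this]
    simp
  | succ k ih =>
    rw [renewal_step, ih (m+1), Finset.sum_range_succ]
    have e0 : m + 1 + k = m + (k + 1) := by omega
    have e1 : m + (k + 1 - 1 - k) = m := by omega
    rw [e0, e1, add_assoc]
    congr 2
    refine Finset.sum_congr rfl ?_
    intro j hj
    have hj := Finset.mem_range.mp hj
    have e2 : m + 1 + (k - 1 - j) = m + (k + 1 - 1 - j) := by omega
    rw [e2]

lemma fareyG_bounds (n : ℕ) {x : ℝ} (h0 : 1/2 ≤ x) (h1 : x ≤ 1) :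
    fareyG (n+1) 1 ≤ fareyG n x ∧ fareyG n x ≤ fareyG n 1 := by
  obtain ⟨-, hm, -⟩ := fareyG_class n
  rw [← fareyG_half]
  exact ⟨hm (by norm_num) ⟨by linarith, h1⟩ h0, hm ⟨by linarith, h1⟩ (by norm_num) h1⟩

lemma piece_bounds (n m : ℕ) :
    ENNReal.ofReal (fareyG (n+1) 1 / (m + 2)) ≤
      ∫⁻ x in Set.Ioo (((m:ℝ) + 1) / (m + 2)) 1, ENNReal.ofReal (fareyG n x / x) ∧
    ∫⁻ x in Set.Ioo (((m:ℝ) + 1) / (m + 2)) 1, ENNReal.ofReal (fareyG n x / x) ≤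
      ENNReal.ofReal (fareyG n 1 / (m + 1)) := by
  have hm0 : (0:ℝ) ≤ m := Nat.cast_nonneg m
  have hh : (1/2 : ℝ) ≤ (m + 1) / (m + 2) := by
    rw [div_le_div_iff₀ (by norm_num) (by positivity)]; linarith
  have hlen : 1 - ((m:ℝ) + 1) / (m + 2) = 1 / (m + 2) := by field_simp; ring
  have hp := (fareyG_class n).2.2 1 (by norm_num)
  have hp' := (fareyG_class (n+1)).2.2 1 (by norm_num)
  constructor
  · calc ENNReal.ofReal (fareyG (n+1) 1 / (m + 2)) =
        ∫⁻ x in Set.Ioo (((m:ℝ) + 1) / (m + 2)) 1, ENNReal.ofReal (fareyG (n+1) 1) := by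
          rw [setLIntegral_const, Real.volume_Ioo, hlen, ← ENNReal.ofReal_mul hp']
          congr 1; ring
      _ ≤ _ := by
          refine setLIntegral_mono' measurableSet_Ioo ?_
          intro x hx
          apply ENNReal.ofReal_le_ofReal
          have hx0 : 0 < x := by linarith [hx.1]
          have := (fareyG_bounds n (hh.trans hx.1.le) hx.2.le).1
          rw [le_div_iff₀ hx0]
          nlinarith [hx.2]
  · calc _ ≤ ∫⁻ x in Set.Ioo (((m:ℝ) + 1) / (m + 2)) 1,
          ENNReal.ofReal (fareyG n 1 * ((m + 2) / (m + 1))) := by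
          refine setLIntegral_mono' measurableSet_Ioo ?_
          intro x hx
          apply ENNReal.ofReal_le_ofReal
          have hx0 : 0 < x := by linarith [hx.1]
          have h1 := (fareyG_bounds n (hh.trans hx.1.le) hx.2.le).2
          have h2 : 1 ≤ (m + 2) / ((m:ℝ) + 1) * x := by
            have := hx.1
            rw [div_lt_iff₀ (by positivity)] at this
            rw [div_mul_eq_mul_div, le_div_iff₀ (by positivity)]
            linarith
          rw [div_le_iff₀ hx0]
          calc fareyG n x ≤ fareyG n 1 * 1 := by linarith
            _ ≤ fareyG n 1 * ((m + 2) / ((m:ℝ) + 1) * x) := mul_le_mul_of_nonneg_left h2 hp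
            _ = _ := by ring
      _ = _ := by
          rw [setLIntegral_const, Real.volume_Ioo, hlen, ← ENNReal.ofReal_mul (by positivity)]
          congr 1
          field_simp

/-- The two renewal inequalities for `a k = fareyG k 1`. -/
lemma renewal_ineq (n : ℕ) :
    ∑ k ∈ Finset.range n, fareyG (k+1) 1 / (((n - 1 - k : ℕ) : ℝ) + 2) ≤ 1 ∧
    1 - 1 / ((n:ℝ) + 1) ≤ ∑ k ∈ Finset.range n, fareyG k 1 / (((n - 1 - k : ℕ) : ℝ) + 1) := by
  have h := renewal_sum 0 n
  simp only [Nat.cast_zero, zero_add, div_one] at h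
  rw [total_mass] at h
  have hp : ∀ k, 0 ≤ fareyG k 1 := fun k => (fareyG_class k).2.2 1 (by norm_num)
  have hn : (0:ℝ) ≤ 1 / ((n:ℝ) + 1) := by positivity
  constructor
  · have : ENNReal.ofReal (∑ k ∈ Finset.range n, fareyG (k+1) 1 / (((n - 1 - k : ℕ) : ℝ) + 2)) ≤
        ENNReal.ofReal 1 := by
      rw [ENNReal.ofReal_sum_of_nonneg (fun k _ => div_nonneg (hp _) (by positivity)),
        ENNReal.ofReal_one, h]
      exact le_add_left (Finset.sum_le_sum fun k _ => (piece_bounds k _).1)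
    exact (ENNReal.ofReal_le_ofReal_iff zero_le_one).mp this
  · have hs : 0 ≤ ∑ k ∈ Finset.range n, fareyG k 1 / (((n - 1 - k : ℕ) : ℝ) + 1) :=
      Finset.sum_nonneg (fun k _ => div_nonneg (hp _) (by positivity))
    have : ENNReal.ofReal 1 ≤ ENNReal.ofReal (1 / ((n:ℝ) + 1) +
        ∑ k ∈ Finset.range n, fareyG k 1 / (((n - 1 - k : ℕ) : ℝ) + 1)) := by
      rw [ENNReal.ofReal_add hn hs,
        ENNReal.ofReal_sum_of_nonneg (fun k _ => div_nonneg (hp _) (by positivity)),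
        ENNReal.ofReal_one, h]
      gcongr with k hk
      exact (piece_bounds k _).2
    have := (ENNReal.ofReal_le_ofReal_iff (by positivity)).mp this
    linarith

lemma fareyA_anti : Antitone (fun n => fareyG n 1) := by
  refine antitone_nat_of_succ_le ?_
  intro n
  exact (fareyG_bounds n (by norm_num : (1/2:ℝ) ≤ 1) le_rfl).1

lemma fareyA_nonneg (n : ℕ) : 0 ≤ fareyG n 1 := (fareyG_class n).2.2 1 (by norm_num)

lemma fareyA_le_one (n : ℕ) : fareyG n 1 ≤ 1 := by
  have := fareyA_anti (Nat.zero_le n)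
  simpa [fareyG] using this

lemma harmonic_real (n : ℕ) : ((harmonic n : ℚ) : ℝ) = ∑ i ∈ Finset.range n, 1 / ((i:ℝ) + 1) := by
  simp [harmonic]

lemma fareyA_upper (n : ℕ) : fareyG n 1 * (Real.log (n + 2) - 1) ≤ 1 := by
  have h := (renewal_ineq n).1
  have h1 : ∑ k ∈ Finset.range n, fareyG n 1 * (1 / (((n - 1 - k : ℕ) : ℝ) + 2)) ≤ 1 := by
    refine le_trans (Finset.sum_le_sum ?_) h
    intro k hk
    have hk := Finset.mem_range.mp hk
    rw [mul_one_div]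
    have := fareyA_anti (show k + 1 ≤ n by omega)
    simp only at this
    gcongr
  rw [← Finset.mul_sum, Finset.sum_range_reflect (fun j => 1 / ((j:ℝ) + 2)) n] at h1
  have h2 := log_add_one_le_harmonic (n+1)
  rw [harmonic_real, Finset.sum_range_succ'] at h2
  have h3 : Real.log (n + 2) - 1 ≤ ∑ j ∈ Finset.range n, 1 / ((j:ℝ) + 2) := by
    have e : ∀ j : ℕ, 1 / (((j+1:ℕ):ℝ) + 1) = 1 / ((j:ℝ) + 2) := by
      intro j; push_cast; congr 1; ring
    simp only [e] at h2
    have e2 : (((n + 1 + 1 : ℕ)) : ℝ) = n + 2 := by push_cast; ring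
    rw [e2] at h2
    norm_num at h2 ⊢
    linarith
  exact (mul_le_mul_of_nonneg_left h3 (fareyA_nonneg n)).trans h1

lemma fareyA_sum (M N : ℕ) (h : M ≤ N) :
    ∑ k ∈ Finset.range N, fareyG k 1 ≤ M + N * fareyG M 1 := by
  obtain ⟨d, rfl⟩ := Nat.exists_eq_add_of_le h
  rw [Finset.sum_range_add]
  have h1 : ∑ k ∈ Finset.range M, fareyG k 1 ≤ M := by
    have := Finset.sum_le_sum (s := Finset.range M) (fun k _ => fareyA_le_one k)
    simpa using this
  have h2 : ∑ k ∈ Finset.range d, fareyG (M + k) 1 ≤ d * fareyG M 1 := by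
    have := Finset.sum_le_sum (s := Finset.range d)
      (fun k _ => fareyA_anti (show M ≤ M + k by omega))
    simpa using this
  have h3 : (d:ℝ) * fareyG M 1 ≤ ((M + d : ℕ):ℝ) * fareyG M 1 := by
    refine mul_le_mul_of_nonneg_right ?_ (fareyA_nonneg M)
    push_cast
    have : (0:ℝ) ≤ M := Nat.cast_nonneg M
    linarith
  linarith

lemma fareyA_lower (N : ℕ) (hN : 1 ≤ N) :
    1 - 1 / (2 * (N:ℝ) + 1) ≤ (∑ k ∈ Finset.range N, fareyG k 1) / N +
      fareyG N 1 * (1 + Real.log N) := by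
  have h := (renewal_ineq (N + N)).2
  have hN0 : (0:ℝ) < N := by exact_mod_cast hN
  rw [Finset.sum_range_add] at h
  have h1 : ∑ k ∈ Finset.range N, fareyG k 1 / (((N + N - 1 - k : ℕ) : ℝ) + 1) ≤
      (∑ k ∈ Finset.range N, fareyG k 1) / N := by
    rw [Finset.sum_div]
    refine Finset.sum_le_sum ?_
    intro k hk
    have hk := Finset.mem_range.mp hk
    refine div_le_div_of_nonneg_left (fareyA_nonneg k) hN0 ?_
    have : N ≤ (N + N - 1 - k) + 1 := by omega
    exact_mod_cast this
  have h2 : ∑ k ∈ Finset.range N, fareyG (N + k) 1 / (((N + N - 1 - (N + k) : ℕ) : ℝ) + 1) ≤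
      fareyG N 1 * (1 + Real.log N) := by
    have h3 : ∑ k ∈ Finset.range N, fareyG (N + k) 1 / (((N + N - 1 - (N + k) : ℕ) : ℝ) + 1) ≤
        ∑ k ∈ Finset.range N, fareyG N 1 * (1 / (((N - 1 - k : ℕ) : ℝ) + 1)) := by
      refine Finset.sum_le_sum ?_
      intro k hk
      have e : N + N - 1 - (N + k) = N - 1 - k := by omega
      rw [e, mul_one_div]
      have := fareyA_anti (show N ≤ N + k by omega)
      simp only at this
      gcongr
    rw [← Finset.mul_sum, Finset.sum_range_reflect (fun j => 1 / ((j:ℝ) + 1)) N,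
      ← harmonic_real] at h3
    exact h3.trans (mul_le_mul_of_nonneg_left (harmonic_le_one_add_log N) (fareyA_nonneg N))
  have e : ((N + N : ℕ) : ℝ) + 1 = 2 * N + 1 := by push_cast; ring
  rw [e] at h
  linarith

lemma fareyA_asymp (N : ℕ) (hN : 1 ≤ N) (hL : 4 ≤ Real.log N) :
    |fareyG N 1 - 1 / Real.log N| ≤ 9 / (Real.log N)^2 := by
  have hN0 : (0:ℝ) < N := by exact_mod_cast hN
  set L := Real.log N with hLdef
  have hL0 : 0 < L := by linarith
  set a := fareyG N 1 with ha
  have ha0 : 0 ≤ a := fareyA_nonneg N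
  set M := Nat.sqrt N with hM
  have hM1 : 1 ≤ M := Nat.sqrt_pos.mpr hN
  have hM0 : (0:ℝ) < M := by exact_mod_cast hM1
  have hMM : (M:ℝ) * M ≤ N := by exact_mod_cast Nat.sqrt_le N
  have hMN : (N:ℝ) ≤ (M + 1) * (M + 1) := by
    exact_mod_cast (Nat.lt_succ_sqrt N).le
  have hMleN : M ≤ N := Nat.sqrt_le_self N
  have hlogM : L ≤ 2 * Real.log (M + 1) := by
    have := Real.log_le_log hN0 hMN
    rw [Real.log_mul (by positivity) (by positivity)] at this
    linarith
  have hlogM2 : Real.log (M + 1) ≤ M := by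
    have := Real.log_le_sub_one_of_pos (show (0:ℝ) < M + 1 by positivity)
    linarith
  have hup : a * (L - 1) ≤ 1 := by
    have h := fareyA_upper N
    have : L ≤ Real.log (N + 2) := Real.log_le_log hN0 (by linarith)
    exact (mul_le_mul_of_nonneg_left (by linarith) ha0).trans h
  have haL : a ≤ 2 / L := by
    rw [le_div_iff₀ hL0]; nlinarith
  have haM : fareyG M 1 ≤ 4 / L := by
    have h := fareyA_upper M
    have h1 : Real.log (M + 1) ≤ Real.log (M + 2) := Real.log_le_log (by positivity) (by linarith)
    have h2 := fareyA_nonneg M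
    rw [le_div_iff₀ hL0]
    have : fareyG M 1 * (L / 2 - 1) ≤ 1 :=
      (mul_le_mul_of_nonneg_left (by linarith) h2).trans h
    nlinarith
  have hs := fareyA_sum M N hMleN
  have hs2 : (∑ k ∈ Finset.range N, fareyG k 1) / N ≤ 6 / L := by
    have h1 : (∑ k ∈ Finset.range N, fareyG k 1) / N ≤ M / N + fareyG M 1 := by
      rw [div_le_iff₀ hN0, add_mul, div_mul_cancel₀ _ hN0.ne']
      linarith
    have h2 : (M:ℝ) / N ≤ 2 / L := by
      rw [div_le_div_iff₀ hN0 hL0]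
      nlinarith
    have : 2 / L + 4 / L = 6 / L := by ring
    linarith
  have hsm : 1 / (2 * (N:ℝ) + 1) ≤ 1 / L := by
    refine one_div_le_one_div_of_le hL0 ?_
    have := Real.log_le_sub_one_of_pos hN0
    linarith
  have hlow := fareyA_lower N hN
  rw [← hLdef, ← ha] at hlow
  have e : a - 1 / L = (a * L - 1) / L := by field_simp
  have e9 : 9 / L^2 = (9 / L) / L := by field_simp
  rw [e, abs_div, abs_of_pos hL0, e9]
  refine div_le_div_of_nonneg_right ?_ hL0.le
  have e7 : 6 / L + 1 / L + 2 / L = 9 / L := by ring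
  have e2 : 2 / L ≤ 9 / L := div_le_div_of_nonneg_right (by norm_num) hL0.le
  rw [abs_le]
  constructor
  · have : a * (1 + L) = a + a * L := by ring
    linarith
  · have : a * (L - 1) = a * L - a := by ring
    linarith

/-- `u n = 1 / log n + O(1 / log² n)`. -/
def LogAsymp (u : ℕ → ℝ) : Prop :=
  ∃ C : ℝ, ∀ᶠ n : ℕ in atTop, |u n - 1 / Real.log n| ≤ C / (Real.log n)^2

lemma tendsto_log_nat : Tendsto (fun n : ℕ => Real.log (n:ℝ)) atTop atTop :=
  Real.tendsto_log_atTop.comp tendsto_natCast_atTop_atTop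

lemma LogAsymp.shift {u : ℕ → ℝ} (hu : LogAsymp u) (s : ℕ → ℕ) (hs : Tendsto s atTop atTop)
    (hlog : ∀ᶠ n : ℕ in atTop, |Real.log (s n) - Real.log n| ≤ 1) :
    LogAsymp (fun n => u (s n)) := by
  obtain ⟨C, hC⟩ := hu
  refine ⟨4 * |C| + 2, ?_⟩
  filter_upwards [hs.eventually hC, hlog, tendsto_log_nat.eventually_ge_atTop 4] with n h1 h2 h3
  set L := Real.log n
  set L' := Real.log (s n)
  rw [abs_le] at h2
  have hL' : L / 2 ≤ L' := by linarith
  have hL0 : 0 < L := by linarith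
  have hL0' : 0 < L' := by linarith
  have b1 : C / L'^2 ≤ 4 * |C| / L^2 := by
    rw [div_le_div_iff₀ (by positivity) (by positivity)]
    have : L^2 ≤ 4 * L'^2 := by nlinarith
    have h4 := mul_le_mul_of_nonneg_left this (abs_nonneg C)
    have h5 := mul_le_mul_of_nonneg_right (le_abs_self C) (sq_nonneg L)
    linarith
  have b2 : |1 / L' - 1 / L| ≤ 2 / L^2 := by
    have e : 1 / L' - 1 / L = (L - L') / (L' * L) := by field_simp
    rw [e, abs_div, abs_of_pos (by positivity : 0 < L' * L),
      div_le_div_iff₀ (by positivity) (by positivity)]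
    have h6 : |L - L'| ≤ 1 := by rw [abs_le]; constructor <;> linarith
    have h7 : |L - L'| * L^2 ≤ 1 * L^2 := mul_le_mul_of_nonneg_right h6 (sq_nonneg L)
    nlinarith
  have e3 : u (s n) - 1 / L = (u (s n) - 1 / L') + (1 / L' - 1 / L) := by ring
  rw [e3, add_div]
  exact (abs_add_le _ _).trans (add_le_add (h1.trans b1) b2)

lemma LogAsymp.squeeze {u v w : ℕ → ℝ} (hu : LogAsymp u) (hv : LogAsymp v)
    (h1 : ∀ n, u n ≤ w n) (h2 : ∀ n, w n ≤ v n) : LogAsymp w := by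
  obtain ⟨C, hC⟩ := hu
  obtain ⟨D, hD⟩ := hv
  refine ⟨max C D, ?_⟩
  filter_upwards [hC, hD] with n hc hd
  have m1 : C / (Real.log n)^2 ≤ max C D / (Real.log n)^2 :=
    div_le_div_of_nonneg_right (le_max_left _ _) (sq_nonneg _)
  have m2 : D / (Real.log n)^2 ≤ max C D / (Real.log n)^2 :=
    div_le_div_of_nonneg_right (le_max_right _ _) (sq_nonneg _)
  rw [abs_le] at hc hd ⊢
  constructor <;> linarith [h1 n, h2 n]

lemma LogAsymp.affine {u v : ℕ → ℝ} (hu : LogAsymp u) (hv : LogAsymp v) (c : ℝ) :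
    LogAsymp (fun n => (1 + c) * u n - c * v n) := by
  obtain ⟨C, hC⟩ := hu
  obtain ⟨D, hD⟩ := hv
  refine ⟨|1 + c| * C + |c| * D, ?_⟩
  filter_upwards [hC, hD] with n hc hd
  have e : (1 + c) * u n - c * v n - 1 / Real.log n =
      (1 + c) * (u n - 1 / Real.log n) - c * (v n - 1 / Real.log n) := by ring
  rw [e, add_div, mul_div_assoc, mul_div_assoc]
  refine (abs_sub _ _).trans ?_
  rw [abs_mul, abs_mul]
  gcongr

lemma log_succ_sub {n : ℕ} (hn : 1 ≤ n) :
    0 ≤ Real.log ((n + 1 : ℕ) : ℝ) - Real.log n ∧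
    Real.log ((n + 1 : ℕ) : ℝ) - Real.log n ≤ 1 := by
  have hn0 : (0:ℝ) < n := by exact_mod_cast hn
  have hn1 : (1:ℝ) ≤ n := by exact_mod_cast hn
  push_cast
  constructor
  · have := Real.log_le_log hn0 (show (n:ℝ) ≤ n + 1 by linarith)
    linarith
  · rw [← Real.log_div (by positivity) (by positivity)]
    refine (Real.log_le_sub_one_of_pos (by positivity)).trans ?_
    have : ((n:ℝ) + 1) / n = 1 + 1 / n := by field_simp
    rw [this]
    have : 1 / (n:ℝ) ≤ 1 := by rw [div_le_one hn0]; exact hn1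
    linarith

lemma LogAsymp.succ {u : ℕ → ℝ} (hu : LogAsymp u) : LogAsymp (fun n => u (n+1)) := by
  refine hu.shift (fun n => n + 1) (tendsto_add_atTop_nat 1) ?_
  filter_upwards [eventually_ge_atTop 1] with n hn
  have := log_succ_sub hn
  rw [abs_le]
  constructor <;> linarith [this.1, this.2]

lemma LogAsymp.pred {u : ℕ → ℝ} (hu : LogAsymp u) : LogAsymp (fun n => u (n-1)) := by
  refine hu.shift (fun n => n - 1) (tendsto_sub_atTop_nat 1) ?_
  filter_upwards [eventually_ge_atTop 2] with n hn
  obtain ⟨m, rfl⟩ : ∃ m, n = m + 1 := ⟨n - 1, by omega⟩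
  have := log_succ_sub (show 1 ≤ m by omega)
  rw [Nat.add_sub_cancel, abs_le]
  constructor <;> linarith [this.1, this.2]

lemma logAsymp_one : LogAsymp (fun n => fareyG n 1) := by
  refine ⟨9, ?_⟩
  filter_upwards [eventually_ge_atTop 1, tendsto_log_nat.eventually_ge_atTop 4] with n h1 h2
  exact fareyA_asymp n h1 h2

lemma logAsymp_inv (j : ℕ) : LogAsymp (fun n => fareyG n (1 / ((j + 1 : ℕ) : ℝ))) := by
  induction j with
  | zero => simpa using logAsymp_one
  | succ j ih =>
    set k := j + 1 with hk
    have hk1 : 1 ≤ k := by omega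
    have hk0 : (0:ℝ) < k := by exact_mod_cast hk1
    refine LogAsymp.squeeze (LogAsymp.affine ih.succ logAsymp_one (1 / (k:ℝ))) logAsymp_one ?_ ?_
    · intro n
      have h := fareyG_inv n k hk1
      have hle : fareyG n ((k:ℝ) / (k+1)) ≤ fareyG n 1 := by
        refine (fareyG_class n).2.1 ⟨by positivity, ?_⟩ (by norm_num) ?_ <;>
        · rw [div_le_one (by positivity)]; linarith
      rw [h]
      have e : (1 + 1 / (k:ℝ)) * ((k:ℝ) / (k+1) * fareyG n (1 / ((k+1 : ℕ) : ℝ)) +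
          1 / ((k:ℝ)+1) * fareyG n ((k:ℝ) / (k+1))) - 1 / (k:ℝ) * fareyG n 1 =
          fareyG n (1 / ((k+1 : ℕ) : ℝ)) +
            1 / (k:ℝ) * (fareyG n ((k:ℝ) / (k+1)) - fareyG n 1) := by
        have e1 : 1 + 1 / (k:ℝ) = (k + 1) / k := by field_simp
        rw [e1]
        field_simp
        ring
      rw [e]
      have : 0 ≤ 1 / (k:ℝ) := by positivity
      nlinarith
    · intro n
      have h1 : 1 / (((k + 1 : ℕ)) : ℝ) ≤ 1 := by
        rw [div_le_one (by positivity)]; push_cast; linarith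
      exact (fareyG_class n).2.1 ⟨by positivity, h1⟩ (by norm_num) h1

lemma preimage_bounds (α β : ℝ) (hα : 0 < α) (hαβ : α < β) (hβ : β ≤ 1) (j : ℕ)
    (hj : 1 / ((j + 1 : ℕ) : ℝ) ≤ α) (n : ℕ) :
    fareyG (n - 1) (1 / ((j + 1 : ℕ) : ℝ)) * Real.log (β / α) ≤ preimageMeasure α β n ∧
    preimageMeasure α β n ≤ fareyG (n - 1) 1 * Real.log (β / α) := by
  unfold preimageMeasure
  set k := n - 1
  obtain ⟨-, hm, hp⟩ := fareyG_class k
  have hsub : Set.Icc α β ⊆ Set.Ioc 0 1 := fun x hx => ⟨by linarith [hx.1], by linarith [hx.2]⟩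
  rw [measure_eq k _ measurableSet_Icc hsub]
  have hlog : 0 ≤ Real.log (β / α) := Real.log_nonneg (by rw [le_div_iff₀ hα]; linarith)
  have hint : ∫⁻ x in Set.Icc α β, ENNReal.ofReal (1 / x) = ENNReal.ofReal (Real.log (β / α)) := by
    have hcont : ContinuousOn (fun x : ℝ => 1 / x) (Set.Icc α β) :=
      continuousOn_const.div continuousOn_id (fun x hx => by
        have : 0 < x := by linarith [hx.1]
        exact this.ne')
    rw [← ofReal_integral_eq_lintegral_ofReal hcont.integrableOn_Icc,
      integral_Icc_eq_integral_Ioc, ← intervalIntegral.integral_of_le hαβ.le,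
      integral_one_div_of_pos hα (by linarith)]
    refine (ae_restrict_iff' measurableSet_Icc).mpr (Eventually.of_forall ?_)
    intro x hx
    have : 0 < x := by linarith [hx.1]
    simp only [Pi.zero_apply]
    positivity
  have hcst : ∀ c : ℝ, 0 ≤ c → ∫⁻ x in Set.Icc α β, ENNReal.ofReal (c / x) =
      ENNReal.ofReal (c * Real.log (β / α)) := by
    intro c hc
    rw [ENNReal.ofReal_mul hc, ← hint, ← lintegral_const_mul _ (by fun_prop)]
    congr 1
    funext x
    rw [← ENNReal.ofReal_mul hc, mul_one_div]
  have hjm : 1 / ((j + 1 : ℕ) : ℝ) ∈ Set.Icc (0:ℝ) 1 := ⟨by positivity, by linarith⟩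
  have h1m : (1:ℝ) ∈ Set.Icc (0:ℝ) 1 := by norm_num
  have lo : ENNReal.ofReal (fareyG k (1 / ((j + 1 : ℕ) : ℝ)) * Real.log (β / α)) ≤
      ∫⁻ x in Set.Icc α β, ENNReal.ofReal (fareyG k x / x) := by
    rw [← hcst _ (hp _ hjm)]
    refine setLIntegral_mono' measurableSet_Icc ?_
    intro x hx
    have hx0 : 0 < x := by linarith [hx.1]
    apply ENNReal.ofReal_le_ofReal
    refine div_le_div_of_nonneg_right ?_ hx0.le
    exact hm hjm ⟨hx0.le, by linarith [hx.2]⟩ (hj.trans hx.1)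
  have hi : ∫⁻ x in Set.Icc α β, ENNReal.ofReal (fareyG k x / x) ≤
      ENNReal.ofReal (fareyG k 1 * Real.log (β / α)) := by
    rw [← hcst _ (hp _ h1m)]
    refine setLIntegral_mono' measurableSet_Icc ?_
    intro x hx
    have hx0 : 0 < x := by linarith [hx.1]
    apply ENNReal.ofReal_le_ofReal
    refine div_le_div_of_nonneg_right ?_ hx0.le
    exact hm ⟨hx0.le, by linarith [hx.2]⟩ h1m (by linarith [hx.2])
  have hfin : ∫⁻ x in Set.Icc α β, ENNReal.ofReal (fareyG k x / x) ≠ ⊤ :=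
    ne_top_of_le_ne_top ENNReal.ofReal_ne_top hi
  constructor
  · exact (ENNReal.ofReal_le_iff_le_toReal hfin).mp lo
  · exact ENNReal.toReal_le_of_le_ofReal (mul_nonneg (hp _ h1m) hlog) hi

lemma preimage_asymp (α β : ℝ) (hα : 0 < α) (hαβ : α < β) (hβ : β ≤ 1) :
    LogAsymp (fun n => preimageMeasure α β n / Real.log (β / α)) := by
  have hlog : 0 < Real.log (β / α) := Real.log_pos (by rw [lt_div_iff₀ hα]; linarith)
  obtain ⟨j, hj⟩ := exists_nat_one_div_lt hα
  have hj' : 1 / ((j + 1 : ℕ) : ℝ) ≤ α := by push_cast; exact hj.le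
  refine LogAsymp.squeeze (logAsymp_inv j).pred logAsymp_one.pred ?_ ?_
  · intro n
    rw [le_div_iff₀ hlog]
    exact (preimage_bounds α β hα hαβ hβ j hj' n).1
  · intro n
    rw [div_le_iff₀ hlog]
    exact (preimage_bounds α β hα hαβ hβ j hj' n).2

theorem effective_farey_asymptotics (α β : ℝ) (hα : 0 < α) (hαβ : α < β) (hβ : β ≤ 1) :
    (∃ C : ℝ, ∃ n₀ : ℕ, ∀ n : ℕ, n₀ ≤ n →
        |preimageMeasure α β n - Real.log (β / α) / Real.log n| ≤
          C / (Real.log n) ^ 2) ∧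
    Tendsto (fun n : ℕ => preimageMeasure α β n * Real.log n) atTop
      (nhds (Real.log (β / α))) := by
  have hlog : 0 < Real.log (β / α) := Real.log_pos (by rw [lt_div_iff₀ hα]; linarith)
  have main : ∃ C : ℝ, ∃ n₀ : ℕ, ∀ n : ℕ, n₀ ≤ n →
        |preimageMeasure α β n - Real.log (β / α) / Real.log n| ≤
          C / (Real.log n) ^ 2 := by
    obtain ⟨C, hC⟩ := preimage_asymp α β hα hαβ hβ
    obtain ⟨n₀, hn₀⟩ := eventually_atTop.mp hC
    refine ⟨Real.log (β / α) * C, n₀, fun n hn => ?_⟩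
    have h := hn₀ n hn
    have e : preimageMeasure α β n - Real.log (β / α) / Real.log n =
        Real.log (β / α) * (preimageMeasure α β n / Real.log (β / α) - 1 / Real.log n) := by
      rw [mul_sub, mul_div_cancel₀ _ hlog.ne', mul_one_div]
    rw [e, abs_mul, abs_of_pos hlog, mul_div_assoc]
    exact mul_le_mul_of_nonneg_left h hlog.le
  refine ⟨main, ?_⟩
  obtain ⟨C, n₀, hC⟩ := main
  rw [tendsto_iff_norm_sub_tendsto_zero]
  have hz : Tendsto (fun n : ℕ => C / Real.log (n:ℝ)) atTop (nhds 0) :=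
    tendsto_const_nhds.div_atTop tendsto_log_nat
  refine squeeze_zero' (Eventually.of_forall fun n => norm_nonneg _) ?_ hz
  filter_upwards [eventually_ge_atTop n₀, tendsto_log_nat.eventually_ge_atTop 1] with n h1 h2
  have hL : 0 < Real.log (n:ℝ) := by linarith
  have h := hC n h1
  have e : preimageMeasure α β n * Real.log n - Real.log (β / α) =
      (preimageMeasure α β n - Real.log (β / α) / Real.log n) * Real.log n := by
    rw [sub_mul, div_mul_cancel₀ _ hL.ne']
  rw [Real.norm_eq_abs, e, abs_mul, abs_of_pos hL]
  calc _ ≤ C / (Real.log n)^2 * Real.log n := mul_le_mul_of_nonneg_right h hL.le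
    _ = _ := by field_simp
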